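/- For a function $p$ of $y$ with derivative $p'$ and a parameter $m$, let $$A^{\mathrm{FN}}(\lambda;y)=\begin{bmatrix}-6i\lambda^2-3ip^2-iy & 6p\lambda+3ip'+m\lambda^{-1}\\ 6p\lambda-3ip'+m\lambda^{-1} & 6i\lambda^2+3ip^2+iy\end{bmatrix}$$ be the Flaschka–Newell matrix. For $\lambda\in\mathbb{C}$ with $\lambda\neq 0$ and $y\in\mathbb{R}$ with $y\neq 0$, define $$T_1(\lambda;y)=I_2+\frac{i}{2\lambda y}\begin{bmatrix}-1&-1\\1&1\end{bmatrix},\qquad A_0(\lambda;y)=\begin{bmatrix}-6i\lambda^2-iy&0\\0&6i\lambda^2+iy\end{bmatrix}$$ (the matrix $A^{\mathrm{FN}}$ with $p=0$, $p'=0$, $m=0$) and $$A_1(\lambda;y)=\begin{bmatrix}-6i\lambda^2-\frac{3i}{y^2}-iy & \frac{6\lambda}{y}-\frac{3i}{y^2}+\lambda^{-1}\\ \frac{6\lambda}{y}+\frac{3i}{y^2}+\lambda^{-1} & 6i\lambda^2+\frac{3i}{y^2}+iy\end{bmatrix}$$ (the matrix $A^{\mathrm{FN}}$ with $p=1/y$,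 $p'=-1/y^2$, $m=1$). Then $\dfrac{\partial T_1}{\partial\lambda}+T_1A_0=A_1T_1$, where $\partial T_1/\partial\lambda$ is the entrywise derivative of $T_1$ with respect to $\lambda$. -/

import Mathlib

/-!
`T₁ = 1 + c N` with `N` nilpotent of order two, so `T₁⁻¹ = 1 - c N` and the gauge transform
`(∂T₁/∂λ + T₁ A₀) T₁⁻¹` of `A₀` is a polynomial in `N`, namely
`A₀ + c [N, A₀] + (∂c/∂λ) N - c² N A₀ N`. As `A₀` is a multiple of `σ₃`, and `[N, σ₃] = 2 σ₁`,
`N σ₃ N = -2 N`, this is a combination of `σ₃`, `σ₁` and `N`. So is `A^FN` whenever `p` solves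
the Riccati equation `p' = -p²`, since the terms in `p²` and `p'` then combine to `3 i p² N`.
For `p = 1/y` and `m = 1` the coefficients of the two combinations agree.
-/

open Complex Matrix

/-- The Flaschka–Newell matrix `A^FN(λ; y)` of a function `p` (with derivative `p'`) and a
parameter `m`. -/
noncomputable def AFN (p : ℝ → ℂ) (m : ℂ) (l : ℂ) (y : ℝ) : Matrix (Fin 2) (Fin 2) ℂ :=
  !![-6 * I * l ^ 2 - 3 * I * p y ^ 2 - I * (y : ℂ),
      6 * p y * l + 3 * I * deriv p y + m * l⁻¹;
     6 * p y * l - 3 * I * deriv p y + m * l⁻¹,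
      6 * I * l ^ 2 + 3 * I * p y ^ 2 + I * (y : ℂ)]

/-- The first-order Darboux transformation matrix `T₁(λ; y)`. -/
noncomputable def T1 (l : ℂ) (y : ℝ) : Matrix (Fin 2) (Fin 2) ℂ :=
  1 + (I / (2 * l * (y : ℂ))) • !![(-1 : ℂ), -1; 1, 1]

/-- The matrix `A^FN` with `p = 0`, `p' = 0`, `m = 0`, written out. -/
noncomputable def A0 (l : ℂ) (y : ℝ) : Matrix (Fin 2) (Fin 2) ℂ :=
  !![-6 * I * l ^ 2 - I * (y : ℂ), 0; 0, 6 * I * l ^ 2 + I * (y : ℂ)]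

/-- The matrix `A^FN` with `p = 1/y`, `p' = -1/y²`, `m = 1`, written out. -/
noncomputable def A1 (l : ℂ) (y : ℝ) : Matrix (Fin 2) (Fin 2) ℂ :=
  !![-6 * I * l ^ 2 - 3 * I / (y : ℂ) ^ 2 - I * (y : ℂ),
      6 * l / (y : ℂ) - 3 * I / (y : ℂ) ^ 2 + l⁻¹;
     6 * l / (y : ℂ) + 3 * I / (y : ℂ) ^ 2 + l⁻¹,
      6 * I * l ^ 2 + 3 * I / (y : ℂ) ^ 2 + I * (y : ℂ)]

/-- The first Pauli matrix `σ₁`, the symmetric off-diagonal direction of the Lax matrices. -/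
def pauliX : Matrix (Fin 2) (Fin 2) ℂ := !![0, 1; 1, 0]

/-- The third Pauli matrix `σ₃`, the diagonal direction of the Lax matrices. -/
def pauliZ : Matrix (Fin 2) (Fin 2) ℂ := !![1, 0; 0, -1]

/-- The constant direction `N` of the Darboux transformation `T₁ = 1 + c N`. -/
def darbouxNilpotent : Matrix (Fin 2) (Fin 2) ℂ := !![-1, -1; 1, 1]

/-- The coefficient `c` of the Darboux transformation `T₁ = 1 + c N`. -/
noncomputable def darbouxCoeff (l : ℂ) (y : ℝ) : ℂ := I / (2 * l * (y : ℂ))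

/-- The coefficient of `σ₃` in the seed matrix `A₀`. -/
noncomputable def seedCoeff (l : ℂ) (y : ℝ) : ℂ := -I * (6 * l ^ 2 + (y : ℂ))

theorem add_one_add_mul_eq_mul_one_add {R : Type*} [Ring R] {N M : R} (hN : N * N = 0)
    (hM : M * N = 0) (X : R) :
    M + (1 + N) * X = (X + ⁅N, X⁆ + M - N * X * N) * (1 + N) := by
  have hinv : (1 - N) * (1 + N) = 1 := by simp [mul_add, sub_mul, hN]
  have hgauge : X + ⁅N, X⁆ + M - N * X * N = (M + (1 + N) * X) * (1 - N) := by
    simp only [Ring.lie_def, add_mul, mul_sub, one_mul, mul_one, hM]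
    abel
  rw [hgauge, mul_assoc, hinv, mul_one]

theorem darbouxNilpotent_mul_self : darbouxNilpotent * darbouxNilpotent = 0 := by
  ext i j
  fin_cases i <;> fin_cases j <;> simp [darbouxNilpotent]

theorem smul_darbouxNilpotent_mul_smul_darbouxNilpotent (b c : ℂ) :
    b • darbouxNilpotent * c • darbouxNilpotent = 0 := by
  rw [smul_mul_smul_comm, darbouxNilpotent_mul_self, smul_zero]

theorem lie_darbouxNilpotent_pauliZ : ⁅darbouxNilpotent, pauliZ⁆ = (2 : ℂ) • pauliX := by
  ext i j
  fin_cases i <;> fin_cases j <;> norm_num [Ring.lie_def, darbouxNilpotent, pauliZ, pauliX]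

theorem darbouxNilpotent_mul_pauliZ_mul_darbouxNilpotent :
    darbouxNilpotent * pauliZ * darbouxNilpotent = (-2 : ℂ) • darbouxNilpotent := by
  norm_num [darbouxNilpotent, pauliZ]

theorem lie_smul_darbouxNilpotent_smul_pauliZ (a c : ℂ) :
    ⁅c • darbouxNilpotent, a • pauliZ⁆ = (2 * (a * c)) • pauliX := by
  rw [Ring.lie_def, smul_mul_smul_comm, smul_mul_smul_comm, mul_comm c a, ← smul_sub,
    ← Ring.lie_def, lie_darbouxNilpotent_pauliZ]
  module

theorem gauge_smul_pauliZ (a c d : ℂ) :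
    d • darbouxNilpotent + (1 + c • darbouxNilpotent) * a • pauliZ =
      (a • pauliZ + (2 * (a * c)) • pauliX + (d + 2 * (a * c ^ 2)) • darbouxNilpotent) *
        (1 + c • darbouxNilpotent) := by
  have hsandwich : c • darbouxNilpotent * a • pauliZ * c • darbouxNilpotent =
      (-(2 * (a * c ^ 2))) • darbouxNilpotent := by
    rw [smul_mul_smul_comm, smul_mul_smul_comm,
      darbouxNilpotent_mul_pauliZ_mul_darbouxNilpotent]
    module
  rw [add_one_add_mul_eq_mul_one_add (smul_darbouxNilpotent_mul_smul_darbouxNilpotent c c)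
    (smul_darbouxNilpotent_mul_smul_darbouxNilpotent d c),
    lie_smul_darbouxNilpotent_smul_pauliZ, hsandwich]
  congr 1
  module

theorem AFN_eq_of_deriv_eq_neg_sq {p : ℝ → ℂ} {y : ℝ} (hp : deriv p y = -p y ^ 2) (m l : ℂ) :
    AFN p m l y = seedCoeff l y • pauliZ + (6 * p y * l + m * l⁻¹) • pauliX +
      (3 * I * p y ^ 2) • darbouxNilpotent := by
  rw [AFN, hp]
  ext i j
  fin_cases i <;> fin_cases j <;> simp [seedCoeff, pauliZ, pauliX, darbouxNilpotent] <;> ring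

theorem deriv_one_div_ofReal {y : ℝ} (hy : y ≠ 0) :
    deriv (fun s : ℝ => 1 / (s : ℂ)) y = -(1 / (y : ℂ)) ^ 2 := by
  simpa using (hasDerivAt_inv (ofReal_ne_zero.mpr hy)).comp_ofReal.deriv

theorem AFN_zero (l : ℂ) (y : ℝ) : AFN (fun _ => 0) 0 l y = A0 l y := by
  simp [AFN, A0]

theorem AFN_one_div (l : ℂ) {y : ℝ} (hy : y ≠ 0) :
    AFN (fun s => 1 / (s : ℂ)) 1 l y = A1 l y := by
  rw [AFN, A1, deriv_one_div_ofReal hy]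
  ext i j
  fin_cases i <;> fin_cases j <;> simp <;> ring

theorem A0_eq_smul_pauliZ (l : ℂ) (y : ℝ) : A0 l y = seedCoeff l y • pauliZ := by
  simpa [AFN_zero] using AFN_eq_of_deriv_eq_neg_sq (p := fun _ => 0) (y := y) (by simp) 0 l

theorem T1_eq_one_add_smul (l : ℂ) (y : ℝ) :
    T1 l y = 1 + darbouxCoeff l y • darbouxNilpotent :=
  rfl

theorem hasDerivAt_darbouxCoeff {l : ℂ} (hl : l ≠ 0) (y : ℝ) :
    HasDerivAt (fun z => darbouxCoeff z y) (-darbouxCoeff l y / l) l := by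
  have hcoeff (z : ℂ) : darbouxCoeff z y = I / (2 * y) * z⁻¹ := by
    simp only [darbouxCoeff, div_eq_mul_inv, mul_inv]
    ring
  simp only [hcoeff]
  exact ((hasDerivAt_inv hl).const_mul _).congr_deriv (by ring)

theorem hasDerivAt_T1_apply {l : ℂ} (hl : l ≠ 0) (y : ℝ) (i j : Fin 2) :
    HasDerivAt (fun z => T1 z y i j)
      (((-darbouxCoeff l y / l) • darbouxNilpotent) i j) l := by
  simp only [T1_eq_one_add_smul, Matrix.add_apply, Matrix.smul_apply, smul_eq_mul]
  exact ((hasDerivAt_darbouxCoeff hl y).mul_const _).const_add _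

theorem A1_eq_smul_pauliZ_add {l : ℂ} {y : ℝ} (hl : l ≠ 0) (hy : y ≠ 0) :
    A1 l y = seedCoeff l y • pauliZ + (2 * (seedCoeff l y * darbouxCoeff l y)) • pauliX +
      (-darbouxCoeff l y / l + 2 * (seedCoeff l y * darbouxCoeff l y ^ 2)) •
        darbouxNilpotent := by
  have hy' : (y : ℂ) ≠ 0 := ofReal_ne_zero.mpr hy
  have hpauliX : 6 * (1 / (y : ℂ)) * l + 1 * l⁻¹ = 2 * (seedCoeff l y * darbouxCoeff l y) := by
    rw [seedCoeff, darbouxCoeff]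
    field_simp
    linear_combination (6 * l ^ 2 + y) * I_sq
  have hnilpotent : 3 * I * (1 / (y : ℂ)) ^ 2 =
      -darbouxCoeff l y / l + 2 * (seedCoeff l y * darbouxCoeff l y ^ 2) := by
    rw [seedCoeff, darbouxCoeff]
    field_simp
    linear_combination (6 * l ^ 2 + y) * I_sq
  rw [← AFN_one_div l hy, AFN_eq_of_deriv_eq_neg_sq (deriv_one_div_ofReal hy), hpauliX,
    hnilpotent]

/-- For `λ ≠ 0`, `y ≠ 0`: `A₀` and `A₁` are the matrices `A^FN` of `p = 0, m = 0` and of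
`p = 1/y, m = 1`, the matrix `T₁` is entrywise differentiable in `λ`, and
`∂T₁/∂λ + T₁ A₀ = A₁ T₁`. -/
theorem darboux_lambda_part_first_order (l : ℂ) (y : ℝ) (hl : l ≠ 0) (hy : y ≠ 0) :
    AFN (fun _ => 0) 0 l y = A0 l y ∧
    AFN (fun s => 1 / (s : ℂ)) 1 l y = A1 l y ∧
    (∀ i j, DifferentiableAt ℂ (fun z : ℂ => T1 z y i j) l) ∧
    (Matrix.of fun i j => deriv (fun z : ℂ => T1 z y i j) l) + T1 l y * A0 l y =
      A1 l y * T1 l y := by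
  refine ⟨AFN_zero l y, AFN_one_div l hy,
    fun i j => (hasDerivAt_T1_apply hl y i j).differentiableAt, ?_⟩
  have hderiv : (Matrix.of fun i j => deriv (fun z : ℂ => T1 z y i j) l) =
      (-darbouxCoeff l y / l) • darbouxNilpotent := by
    ext i j
    exact (hasDerivAt_T1_apply hl y i j).deriv
  rw [hderiv, T1_eq_one_add_smul, A0_eq_smul_pauliZ, A1_eq_smul_pauliZ_add hl hy]
  exact gauge_smul_pauliZ _ _ _
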